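/- Consider x̄ ∈ ℝⁿ, r > 0 and D = {x ∈ ℝⁿ : ‖x − x̄‖_∞ < r}. Let f : D → ℝⁿ have continuous first derivatives, with component functions f_1, …, f_n, and let A be an n×n real matrix and a > 0 be such that sup_{1 ≤ i ≤ n, x ∈ D} ‖Aᵀ ∇f_i(x) − e_i‖_1 ≤ a < 1 and b := (sup_{1 ≤ i ≤ n} ‖Aᵀ e_i‖_1) · ‖f(x̄)‖_∞ < r(1 − a). Then there exists x* ∈ D with ‖x* − x̄‖_∞ ≤ b/(1 − a) such that f(x*) = 0. -/

import Mathlib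

/-!
The hypothesis on the gradients says that the right-preconditioned Jacobian `f'(x) A` is within
`a < 1` of the identity in the operator norm induced by the sup norm, and the supremum in `b` is
the operator norm `M` of `A` (maximal absolute row sum). Since `A` acts on the right, Banach's fixed
point theorem is applied in the variable `u` with `x = x̄ + A u`, to the map
`T u = u - f (x̄ + A u)`. On the closed ball of radius `ρ = ‖f x̄‖ / (1 - a)` around `0`, the point
`x̄ + A u` stays within `M ρ = b / (1 - a) < r` of `x̄`; there `‖T'‖ ≤ a`, so `T` is a contraction, and
`‖T u‖ ≤ ‖T 0‖ + a ρ = ρ`, so `T` maps the ball to itself. Its fixed point `u` satisfies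
`f (x̄ + A u) = 0`. No invertibility of `A` is needed.
-/

open Matrix Finset

/-- Hölder's inequality for the pairing of `ℓ¹` with the sup norm. -/
lemma abs_dotProduct_le_l1_mul_norm {n : ℕ} (w v : Fin n → ℝ) :
    |w ⬝ᵥ v| ≤ (∑ j, |w j|) * ‖v‖ := by
  rw [dotProduct, Finset.sum_mul]
  refine (Finset.abs_sum_le_sum_abs _ _).trans (Finset.sum_le_sum fun j _ => ?_)
  rw [abs_mul]
  exact mul_le_mul_of_nonneg_left (norm_le_pi_norm v j) (abs_nonneg _)

lemma iSup_row_sum_nonneg {n : ℕ} (A : Matrix (Fin n) (Fin n) ℝ) :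
    0 ≤ ⨆ i : Fin n, ∑ j, |(Aᵀ *ᵥ (Pi.single i 1 : Fin n → ℝ)) j| :=
  Real.iSup_nonneg fun _ => Finset.sum_nonneg fun _ _ => abs_nonneg _

/-- The maximal absolute row sum bounds the sup-norm operator norm of `A`. -/
lemma norm_mulVec_le_iSup_row_sum {n : ℕ} (A : Matrix (Fin n) (Fin n) ℝ) (u : Fin n → ℝ) :
    ‖A *ᵥ u‖ ≤ (⨆ i : Fin n, ∑ j, |(Aᵀ *ᵥ (Pi.single i 1 : Fin n → ℝ)) j|) * ‖u‖ := by
  refine (pi_norm_le_iff_of_nonneg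
    (mul_nonneg (iSup_row_sum_nonneg A) (norm_nonneg u))).2 fun i => ?_
  have h : (A *ᵥ u) i = (Aᵀ *ᵥ (Pi.single i 1 : Fin n → ℝ)) ⬝ᵥ u := by
    simp [mulVec, dotProduct, Pi.single_apply]
  rw [h, Real.norm_eq_abs]
  refine (abs_dotProduct_le_l1_mul_norm _ _).trans
    (mul_le_mul_of_nonneg_right ?_ (norm_nonneg u))
  exact le_ciSup (f := fun i : Fin n => ∑ j, |(Aᵀ *ᵥ (Pi.single i 1 : Fin n → ℝ)) j|)
    (Set.finite_range _).bddAbove i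

/-- If the rows of `L A - 1` have `ℓ¹` norm at most `a`, then `1 - L A` has sup-norm operator norm
at most `a`. -/
lemma norm_sub_apply_mulVec_le {n : ℕ} (A : Matrix (Fin n) (Fin n) ℝ) {a : ℝ} (ha : 0 ≤ a)
    (L : (Fin n → ℝ) →L[ℝ] (Fin n → ℝ))
    (h : ∀ i : Fin n, ∑ j, |(Aᵀ *ᵥ fun l => L (Pi.single l 1) i) j
      - (Pi.single i 1 : Fin n → ℝ) j| ≤ a) (v : Fin n → ℝ) :
    ‖v - L (A *ᵥ v)‖ ≤ a * ‖v‖ := by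
  refine (pi_norm_le_iff_of_nonneg (mul_nonneg ha (norm_nonneg v))).2 fun i => ?_
  have hL : ∀ w : Fin n → ℝ, L w i = (fun l => L (Pi.single l 1) i) ⬝ᵥ w := by
    intro w
    conv_lhs => rw [pi_eq_sum_univ' w]
    simp [dotProduct, Finset.sum_apply, mul_comm]
  have key : (v - L (A *ᵥ v)) i
      = -((Aᵀ *ᵥ (fun l => L (Pi.single l 1) i) - (Pi.single i 1 : Fin n → ℝ)) ⬝ᵥ v) := by
    rw [Pi.sub_apply, hL, sub_dotProduct, single_dotProduct, one_mul, mulVec_transpose,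
      dotProduct_mulVec, neg_sub]
  rw [key, norm_neg, Real.norm_eq_abs]
  exact (abs_dotProduct_le_l1_mul_norm _ _).trans
    (mul_le_mul_of_nonneg_right (h i) (norm_nonneg v))

/-- Moore's theorem, Lemma 2.1 of the paper. Here vectors in `ℝⁿ` are modelled
as `Fin n → ℝ`, whose canonical norm `‖·‖` is the sup (ℓ∞) norm, while the ℓ¹ norm is written
as a sum of absolute values. The gradient of the `i`-th component of `f` at `x` is the vector
of partial derivatives `fun j => fderivWithin ℝ (fun y => f y i) D x (Pi.single j 1)`. -/
theorem moore_stmt2 (n : ℕ) (xbar : Fin n → ℝ) (r : ℝ) (hr : 0 < r)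
    (f : (Fin n → ℝ) → (Fin n → ℝ))
    (hf : ContDiffOn ℝ 1 f (Metric.ball xbar r))
    (A : Matrix (Fin n) (Fin n) ℝ) (a : ℝ) (ha0 : 0 < a) (ha1 : a < 1)
    (hA : ∀ i : Fin n, ∀ x ∈ Metric.ball xbar r,
      ∑ j, |(Aᵀ *ᵥ fun l => fderivWithin ℝ (fun y => f y i) (Metric.ball xbar r) x
          (Pi.single l 1)) j - (Pi.single i 1 : Fin n → ℝ) j| ≤ a)
    (hb : (⨆ i : Fin n, ∑ j, |(Aᵀ *ᵥ (Pi.single i 1 : Fin n → ℝ)) j|) * ‖f xbar‖ < r * (1 - a)) :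
    ∃ xstar ∈ Metric.ball xbar r,
      ‖xstar - xbar‖ ≤ (⨆ i : Fin n, ∑ j, |(Aᵀ *ᵥ (Pi.single i 1 : Fin n → ℝ)) j|) * ‖f xbar‖ / (1 - a) ∧
      f xstar = 0 := by
  have ha : 0 < 1 - a := sub_pos.2 ha1
  have hM := iSup_row_sum_nonneg A
  have hAM := norm_mulVec_le_iSup_row_sum A
  set M : ℝ := ⨆ i : Fin n, ∑ j, |(Aᵀ *ᵥ (Pi.single i 1 : Fin n → ℝ)) j|
  set ρ : ℝ := ‖f xbar‖ / (1 - a) with hρ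
  have hρ0 : 0 ≤ ρ := div_nonneg (norm_nonneg _) ha.le
  have hMρ : M * ρ = M * ‖f xbar‖ / (1 - a) := by rw [hρ, mul_div_assoc]
  have hMρr : M * ρ < r := by rw [hMρ, div_lt_iff₀ ha]; exact hb
  have hAρ : ∀ u ∈ Metric.closedBall (0 : Fin n → ℝ) ρ, ‖A *ᵥ u‖ ≤ M * ρ := fun u hu =>
    (hAM u).trans (mul_le_mul_of_nonneg_left (mem_closedBall_zero_iff.1 hu) hM)
  have hmem : ∀ u ∈ Metric.closedBall (0 : Fin n → ℝ) ρ,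
      xbar + A *ᵥ u ∈ Metric.ball xbar r := fun u hu => by
    rw [mem_ball_iff_norm, add_sub_cancel_left]
    exact (hAρ u hu).trans_lt hMρr
  have hdiff : ∀ x ∈ Metric.ball xbar r, DifferentiableAt ℝ f x := fun x hx =>
    (hf.differentiableOn one_ne_zero).differentiableAt (Metric.isOpen_ball.mem_nhds hx)
  have hpartial : ∀ x ∈ Metric.ball xbar r, ∀ i l : Fin n,
      fderivWithin ℝ (fun y => f y i) (Metric.ball xbar r) x (Pi.single l 1)
        = fderiv ℝ f x (Pi.single l 1) i := fun x hx i l => by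
    rw [fderivWithin_of_isOpen Metric.isOpen_ball hx,
      (hasFDerivAt_pi'.1 (hdiff x hx).hasFDerivAt i).fderiv]
    rfl
  set B : (Fin n → ℝ) →L[ℝ] (Fin n → ℝ) := LinearMap.toContinuousLinearMap A.mulVecLin
  have hBA : ∀ u, B u = A *ᵥ u := fun u => rfl
  set T : (Fin n → ℝ) → (Fin n → ℝ) := fun u => u - f (xbar + A *ᵥ u) with hT
  have hTd : ∀ u ∈ Metric.closedBall (0 : Fin n → ℝ) ρ, HasFDerivWithinAt T
      (ContinuousLinearMap.id ℝ _ - (fderiv ℝ f (xbar + A *ᵥ u)).comp B)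
      (Metric.closedBall 0 ρ) u := fun u hu => by
    have h1 : HasFDerivAt (fun u => xbar + A *ᵥ u) B u := B.hasFDerivAt.const_add xbar
    have h2 := (hdiff _ (hmem u hu)).hasFDerivAt.comp u h1
    exact ((hasFDerivAt_id u).sub h2).hasFDerivWithinAt
  have hTbound : ∀ u ∈ Metric.closedBall (0 : Fin n → ℝ) ρ,
      ‖ContinuousLinearMap.id ℝ _ - (fderiv ℝ f (xbar + A *ᵥ u)).comp B‖ ≤ a := fun u hu => by
    refine ContinuousLinearMap.opNorm_le_bound _ ha0.le fun v => ?_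
    refine norm_sub_apply_mulVec_le A ha0.le (fderiv ℝ f (xbar + A *ᵥ u)) (fun i => ?_) v
    have := hA i _ (hmem u hu)
    simpa only [hpartial _ (hmem u hu)] using this
  have hlip : ∀ u ∈ Metric.closedBall (0 : Fin n → ℝ) ρ,
      ∀ v ∈ Metric.closedBall (0 : Fin n → ℝ) ρ, ‖T v - T u‖ ≤ a * ‖v - u‖ := fun u hu v hv =>
    (convex_closedBall 0 ρ).norm_image_sub_le_of_norm_hasFDerivWithin_le hTd hTbound hu hv
  have h0 : (0 : Fin n → ℝ) ∈ Metric.closedBall (0 : Fin n → ℝ) ρ :=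
    Metric.mem_closedBall_self hρ0
  have hT0 : ‖T 0‖ = (1 - a) * ρ := by
    simp only [hT, mulVec_zero, add_zero, zero_sub, norm_neg]
    rw [hρ, mul_div_cancel₀ _ ha.ne']
  have hmaps : Set.MapsTo T (Metric.closedBall 0 ρ) (Metric.closedBall 0 ρ) := fun u hu => by
    have h1 := hlip 0 h0 u hu
    rw [sub_zero] at h1
    rw [mem_closedBall_zero_iff] at hu ⊢
    have h2 : ‖T u‖ ≤ ‖T u - T 0‖ + ‖T 0‖ := by simpa using norm_add_le (T u - T 0) (T 0)
    have h3 := mul_le_mul_of_nonneg_left hu ha0.le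
    linarith
  have hcontr : ContractingWith ⟨a, ha0.le⟩ (hmaps.restrict T _ _) := by
    refine ⟨by exact_mod_cast ha1, LipschitzWith.of_dist_le_mul fun u v => ?_⟩
    rw [Subtype.dist_eq, Subtype.dist_eq, dist_eq_norm, dist_eq_norm]
    exact hlip v v.2 u u.2
  obtain ⟨u, hu, hfix, -⟩ := hcontr.exists_fixedPoint' Metric.isClosed_closedBall.isComplete
    hmaps h0 (edist_ne_top _ _)
  refine ⟨xbar + A *ᵥ u, hmem u hu, ?_, sub_eq_self.1 hfix⟩
  rw [add_sub_cancel_left, ← hMρ]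
  exact hAρ u hu
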